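/- For every n ∈ ℕ, the generalised ant with rule word LLRLRL admits a highway of period 220 + 24n and drift (−2,−2): there exist a finite set S_n ⊆ ℤ², a pattern P_n : S_n → ℤ/6ℤ, a position p_n ∈ S_n and a direction d_n forming a highway of period 220+24n and drift (−2,−2) for LLRLRL. -/

import Mathlib

/-- Cells of the grid `ℤ²`. -/
abbrev Cell : Type := ℤ × ℤ

/-- The four unit directions of `ℤ²` (the state set `Q`). -/
inductive Dir : Type
  | E | N | W | S
deriving DecidableEq

/-- Rotation by 90° counterclockwise. -/
def Dir.left : Dir → Dir
  | .E => .N | .N => .W | .W => .S | .S => .E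

/-- Rotation by 90° clockwise. -/
def Dir.right : Dir → Dir
  | .E => .S | .S => .W | .W => .N | .N => .E

/-- The unit vector of a direction. -/
def Dir.vec : Dir → Cell
  | .E => (1, 0) | .N => (0, 1) | .W => (-1, 0) | .S => (0, -1)

/-- Configurations: a picture `ℤ² → ℤ/nℤ`, a position and a direction. -/
abbrev Config (n : ℕ) : Type := (Cell → ZMod n) × Cell × Dir

/-- One step of the generalised ant whose rule word over the alphabet `ℤ/nℤ` is
described by `isL : ZMod n → Bool` (`isL a = true` iff the ant turns left on symbol
`a`): the symbol under the ant is increased by `1 (mod n)`, the ant turns left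
(counterclockwise) or right (clockwise), and moves one step in its new direction. -/
def antStep (n : ℕ) (isL : ZMod n → Bool) (cfg : Config n) : Config n :=
  let C := cfg.1
  let p := cfg.2.1
  let d' := if isL (C p) then cfg.2.2.left else cfg.2.2.right
  (Function.update C p (C p + 1), p + d'.vec, d')


/-- `IsHighway n isL N drift S P p d` : the pattern `P` (supported on the finite set
`S`, extended by `0` outside `S`), together with the position `p ∈ S` and the
direction `d`, is a highway of period `N` and drift `drift` for the generalised ant
with rule `isL` over the alphabet `ℤ/nℤ`: the ant stays in `S` during the first `N`
steps, after `N` steps it is at `p + drift` in direction `d`, and the pattern is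
reproduced shifted by `drift` (cells of `S` whose shift leaves `S` must carry `0`). -/
def IsHighway (n : ℕ) (isL : ZMod n → Bool) (N : ℕ) (drift : Cell)
    (S : Set Cell) (P : Cell → ZMod n) (p : Cell) (d : Dir) : Prop :=
  S.Finite ∧ p ∈ S ∧ (∀ q : Cell, q ∉ S → P q = 0) ∧
  (∀ t : ℕ, t < N → ((antStep n isL)^[t] (P, p, d)).2.1 ∈ S) ∧
  ((antStep n isL)^[N] (P, p, d)).2.1 = p + drift ∧
  ((antStep n isL)^[N] (P, p, d)).2.2 = d ∧
  (∀ q : Cell, q ∈ S →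
    (q + drift ∈ S → ((antStep n isL)^[N] (P, p, d)).1 (q + drift) = P q) ∧
    (q + drift ∉ S → P q = 0))

/-- The rule word `LLRLRL`: the ant turns left on symbols `0, 1, 3, 5` and right on
symbols `2, 4` (alphabet `ℤ/6ℤ`). -/
def isLLRLRL : ZMod 6 → Bool :=
  fun a => decide (a.val = 0 ∨ a.val = 1 ∨ a.val = 3 ∨ a.val = 5)

/-- States of the finite simulator: a list of columns, a position, a direction. -/
abbrev AntSt : Type := List (List ℕ) × ℕ × ℕ × Dir

def antMv : Dir → ℕ → ℕ → Option (ℕ × ℕ)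
  | .E, x, y => some (x + 1, y)
  | .N, x, y => some (x, y + 1)
  | .W, x + 1, y => some (x, y)
  | .W, 0, _ => none
  | .S, x, y + 1 => some (x, y)
  | .S, _, 0 => none

def antTurn (a : ℕ) (d : Dir) : Dir := if a = 2 ∨ a = 4 then d.right else d.left

def antStepW (s : AntSt) : Option AntSt :=
  match s.1[s.2.1]? with
  | none => none
  | some col =>
    match col[s.2.2.1]? with
    | none => none
    | some a =>
      if a < 6 ∧ s.2.2.1 < 10 then
        match antMv (antTurn a s.2.2.2) s.2.1 s.2.2.1 with
        | none => none
        | some q => some (s.1.set s.2.1 (col.set s.2.2.1 ((a + 1) % 6)), q.1, q.2,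
            antTurn a s.2.2.2)
      else none

def antSim : ℕ → AntSt → Option AntSt
  | 0, s => some s
  | k + 1, s => match antStepW s with
    | none => none
    | some s' => antSim k s'

theorem antSim_add {j k : ℕ} {s s' s'' : AntSt} (h : antSim j s = some s')
    (h' : antSim k s' = some s'') : antSim (j + k) s = some s'' := by
  induction j generalizing s with
  | zero => simp only [antSim, Option.some.injEq] at h; subst h; simpa using h'
  | succ j ih =>
    rw [show j + 1 + k = (j + k) + 1 by ring]
    simp only [antSim] at h ⊢
    cases hs : antStepW s with
    | none => simp [hs] at h
    | some t => simp only [hs] at h ⊢; exact ih h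

theorem antStepW_some {s s' : AntSt} (h : antStepW s = some s') :
    ∃ col a q, s.1[s.2.1]? = some col ∧ col[s.2.2.1]? = some a ∧ a < 6 ∧ s.2.2.1 < 10 ∧
      antMv (antTurn a s.2.2.2) s.2.1 s.2.2.1 = some q ∧
      s' = (s.1.set s.2.1 (col.set s.2.2.1 ((a + 1) % 6)), q.1, q.2, antTurn a s.2.2.2) := by
  unfold antStepW at h
  split at h
  · cases h
  · rename_i col hc
    split at h
    · cases h
    · rename_i a ha
      split at h
      · rename_i hh
        split at h
        · cases h
        · rename_i q hq
          exact ⟨col, a, q, hc, ha, hh.1, hh.2, hq, by simpa using h.symm⟩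
      · cases h

theorem antMv_add {d : Dir} {x y : ℕ} {q : ℕ × ℕ} (h : antMv d x y = some q) (c : ℕ) :
    antMv d (c + x) y = some (c + q.1, q.2) := by
  cases d <;> rcases x with _ | x <;> rcases y with _ | y <;> simp [antMv] at h <;> subst h <;>
    simp [antMv, ← Nat.add_assoc]

def antSh (A B : List (List ℕ)) (s : AntSt) : AntSt :=
  (A ++ s.1 ++ B, A.length + s.2.1, s.2.2)

theorem antStepW_loc {s s' : AntSt} (h : antStepW s = some s') (A B : List (List ℕ)) :
    antStepW (antSh A B s) = some (antSh A B s') := by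
  obtain ⟨col, a, q, hc, ha, h6, h10, hq, rfl⟩ := antStepW_some h
  have hx : s.2.1 < s.1.length := by
    by_contra hn
    rw [List.getElem?_eq_none (by omega)] at hc
    cases hc
  have hc' : (A ++ s.1 ++ B)[A.length + s.2.1]? = some col := by
    rw [List.append_assoc, List.getElem?_append_right (by omega),
      List.getElem?_append_left (by omega)]
    simpa using hc
  have hset : ∀ c, (A ++ s.1 ++ B).set (A.length + s.2.1) c = A ++ s.1.set s.2.1 c ++ B := by
    intro c
    rw [List.append_assoc, List.set_append_right _ _ (by omega),
      List.set_append_left _ _ (by omega)]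
    simp
  simp only [antStepW, antSh, hc', ha, h6, h10, and_self, if_true, antMv_add hq, hset]

theorem antSim_loc' {k : ℕ} {s s' : AntSt} (h : antSim k s = some s') (A B : List (List ℕ)) :
    antSim k (antSh A B s) = some (antSh A B s') := by
  induction k generalizing s with
  | zero => simp only [antSim, Option.some.injEq] at h ⊢; rw [h]
  | succ k ih =>
    simp only [antSim] at h ⊢
    cases hs : antStepW s with
    | none => simp [hs] at h
    | some t => simp only [hs] at h; rw [antStepW_loc hs]; exact ih h

theorem antSim_loc {k : ℕ} {V V' : List (List ℕ)} {x y x' y' : ℕ} {d d' : Dir}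
    (h : antSim k (V, x, y, d) = some (V', x', y', d')) (A B : List (List ℕ))
    {U U' : List (List ℕ)} {z z' : ℕ}
    (hU : U = A ++ V ++ B) (hU' : U' = A ++ V' ++ B) (hz : z = A.length + x)
    (hz' : z' = A.length + x') :
    antSim k (U, z, y, d) = some (U', z', y', d') := by
  subst hU hU' hz hz'
  exact antSim_loc' h A B

/-- The picture described by a list of columns. -/
def antCfg (V : List (List ℕ)) : Cell → ZMod 6 := fun q =>
  if 0 ≤ q.1 ∧ 0 ≤ q.2 ∧ q.2 < 10 then
    ((((V[q.1.toNat]?).getD [])[q.2.toNat]?).getD 0 : ℕ) else 0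

def antEmb (s : AntSt) : Config 6 := (antCfg s.1, ((s.2.1 : ℤ), (s.2.2.1 : ℤ)), s.2.2.2)

theorem antTurn_eq {a : ℕ} (ha : a < 6) (d : Dir) :
    (if isLLRLRL (a : ZMod 6) then d.left else d.right) = antTurn a d := by
  have : isLLRLRL (a : ZMod 6) = decide (¬ (a = 2 ∨ a = 4)) := by
    interval_cases a <;> decide
  rw [this]
  unfold antTurn
  by_cases h : a = 2 ∨ a = 4 <;> simp [h]

theorem antMv_vec {d : Dir} {x y : ℕ} {q : ℕ × ℕ} (h : antMv d x y = some q) :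
    (((x : ℤ), (y : ℤ)) : Cell) + d.vec = ((q.1 : ℤ), (q.2 : ℤ)) := by
  cases d <;> rcases x with _ | x <;> rcases y with _ | y <;> simp [antMv] at h <;> subst h <;>
    simp [Dir.vec]

theorem antStepW_sound {s s' : AntSt} (h : antStepW s = some s') :
    antStep 6 isLLRLRL (antEmb s) = antEmb s' ∧ s'.1.length = s.1.length ∧
      s.2.1 < s.1.length ∧ s.2.2.1 < 10 := by
  obtain ⟨col, a, q, hc, ha, h6, h10, hq, rfl⟩ := antStepW_some h
  have hx : s.2.1 < s.1.length := by
    by_contra hn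
    rw [List.getElem?_eq_none (by omega)] at hc
    cases hc
  have hy : s.2.2.1 < col.length := by
    by_contra hn
    rw [List.getElem?_eq_none (by omega)] at ha
    cases ha
  refine ⟨?_, by simp, hx, h10⟩
  obtain ⟨V, x, y, d⟩ := s
  simp only at hc ha h10 hq hx hy
  have hval : antCfg V ((x : ℤ), (y : ℤ)) = (a : ZMod 6) := by
    simp [antCfg, hc, ha, h10]
  simp only [antStep, antEmb, hval, antTurn_eq h6, antMv_vec hq]
  refine Prod.ext ?_ rfl
  funext r
  obtain ⟨u, v⟩ := r
  change Function.update (antCfg V) _ _ (u, v) = antCfg _ (u, v)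
  by_cases hr : ((u, v) : Cell) = ((x : ℤ), (y : ℤ))
  · rw [hr, Function.update_self]
    have : ((a : ZMod 6) + 1) = (((a + 1) % 6 : ℕ) : ZMod 6) := by
      interval_cases a <;> decide
    rw [this]
    simp [antCfg, h10, hx, hy]
  · rw [Function.update_of_ne hr]
    unfold antCfg
    by_cases hb : 0 ≤ u ∧ 0 ≤ v ∧ v < 10
    · simp only [hb, and_self, if_true]
      obtain ⟨hu, hv, -⟩ := hb
      lift u to ℕ using hu
      lift v to ℕ using hv
      simp only [Int.toNat_natCast]
      by_cases hux : x = u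
      · subst hux
        have hvy : y ≠ v := by
          rintro rfl
          exact hr rfl
        have hc2 : V[x] = col := by
          rw [List.getElem?_eq_getElem hx] at hc
          exact Option.some.inj hc
        simp [hx, hvy, hc2]
      · simp [hux]
    · simp only [hb, if_false]

theorem antSim_sound {k : ℕ} {s s' : AntSt} (h : antSim k s = some s') :
    (antStep 6 isLLRLRL)^[k] (antEmb s) = antEmb s' ∧ 
      ∀ t < k, ∃ x y : ℕ, x < s.1.length ∧ y < 10 ∧
        ((antStep 6 isLLRLRL)^[t] (antEmb s)).2.1 = ((x : ℤ), (y : ℤ)) := by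
  induction k generalizing s with
  | zero =>
    simp only [antSim, Option.some.injEq] at h; subst h
    exact ⟨rfl, fun t ht => absurd ht (Nat.not_lt_zero t)⟩
  | succ k ih =>
    simp only [antSim] at h
    cases hs : antStepW s with
    | none => simp [hs] at h
    | some r =>
      simp only [hs] at h
      obtain ⟨h1, h2, h3, h4⟩ := antStepW_sound hs
      obtain ⟨i1, i2⟩ := ih h
      refine ⟨by rw [Function.iterate_succ_apply, h1, i1], ?_⟩
      intro t ht
      rcases t with _ | t
      · exact ⟨s.2.1, s.2.2.1, h3, h4, rfl⟩
      · rw [Function.iterate_succ_apply, h1, ← h2]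
        exact i2 t (by omega)

def antZ : List ℕ := [0,0,0,0,0,0,0,0,0,0]

def antUp (c : List ℕ) : List ℕ := 0 :: 0 :: c.take 8

theorem ant_highway {N : ℕ} {V F T : List (List ℕ)} {x y : ℕ} {d : Dir}
    (hV : V = antZ :: antZ :: F.map antUp)
    (h : antSim N (V, x + 2, y + 2, d) = some (F ++ T, x, y, d))
    (hx : x + 2 < V.length) (hy : y + 2 < 10) :
    ∃ (S : Set Cell) (P : Cell → ZMod 6) (p : Cell) (d : Dir),
      IsHighway 6 isLLRLRL N ((-2, -2) : Cell) S P p d := by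
  obtain ⟨h1, h2⟩ := antSim_sound h
  have hl : V.length = F.length + 2 := by rw [hV]; simp
  refine ⟨{q | 0 ≤ q.1 ∧ q.1 < V.length ∧ 0 ≤ q.2 ∧ q.2 < 10}, antCfg V,
    (((x + 2 : ℕ) : ℤ), ((y + 2 : ℕ) : ℤ)), d, ?_, ?_, ?_, ?_, ?_, ?_, ?_⟩
  · refine (Set.finite_Icc ((0, 0) : Cell) ((V.length : ℤ), 10)).subset ?_
    rintro ⟨u, v⟩ ⟨a, b, c, e⟩
    simp only at a b c e
    exact ⟨⟨a, c⟩, ⟨b.le, e.le⟩⟩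
  · simp only [Set.mem_ofPred_eq]
    omega
  · rintro ⟨u, v⟩ hq
    unfold antCfg
    split
    · rename_i hb
      simp only [Set.mem_ofPred_eq] at hq hb
      rw [List.getElem?_eq_none (show V.length ≤ u.toNat by omega)]
      simp
    · rfl
  · intro t ht
    obtain ⟨a, b, ha, hb, e⟩ := h2 t ht
    change ((antStep 6 isLLRLRL)^[t] (antEmb (V, x + 2, y + 2, d))).2.1 ∈ _
    rw [e]
    simp only [Set.mem_ofPred_eq]
    simp only at ha
    omega
  · change ((antStep 6 isLLRLRL)^[N] (antEmb (V, x + 2, y + 2, d))).2.1 = _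
    rw [h1]
    simp [antEmb]
  · change ((antStep 6 isLLRLRL)^[N] (antEmb (V, x + 2, y + 2, d))).2.2 = _
    rw [h1]
    rfl
  · change ∀ q, q ∈ _ → (_ → ((antStep 6 isLLRLRL)^[N] (antEmb (V, x + 2, y + 2, d))).1 _ = _) ∧ _
    rw [h1]
    rintro ⟨u, v⟩ ⟨a, b, c, e⟩
    simp only at a b c e
    lift u to ℕ using a
    lift v to ℕ using c
    have hv : v < 10 := by omega
    constructor
    · rintro ⟨a', b', c', e'⟩
      simp only [Prod.mk_add_mk] at a' b' c' e'
      obtain ⟨u, rfl⟩ : ∃ w, u = w + 2 := ⟨u - 2, by omega⟩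
      obtain ⟨v, rfl⟩ : ∃ w, v = w + 2 := ⟨v - 2, by omega⟩
      have hu : u < F.length := by omega
      have hv' : v < 10 := by omega
      have e1 : (((u + 2 : ℕ) : ℤ), ((v + 2 : ℕ) : ℤ)) + ((-2, -2) : Cell)
          = ((u : ℤ), (v : ℤ)) := by simp
      rw [e1]
      have e2 : (V[u + 2]?).getD [] = antUp (F[u]) := by
        rw [hV]; simp [hu]
      have e3 : ((F ++ T)[u]?).getD [] = F[u] := by
        rw [List.getElem?_append_left hu]; simp [hu]
      simp only [antEmb, antCfg, Int.toNat_natCast, e2, e3]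
      have e4 : (antUp F[u])[v + 2]? = (F[u])[v]? := by
        simp only [antUp, List.getElem?_cons_succ]
        rw [List.getElem?_take_of_lt (by omega)]
      rw [e4, if_pos (by omega), if_pos (by omega)]
    · intro hn
      have hn' : u < 2 ∨ v < 2 := by
        by_contra hc
        apply hn
        simp only [Set.mem_ofPred_eq, Prod.mk_add_mk]
        omega
      simp only [antCfg, Int.toNat_natCast]
      rw [if_pos (by omega)]
      have hz : (((V[u]?).getD [])[v]?).getD 0 = 0 := by
        rw [hV]
        rcases u with _ | _ | u
        · simp only [antZ, List.getElem?_cons_zero, Option.getD_some]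
          interval_cases v <;> rfl
        · simp only [antZ, List.getElem?_cons_succ, List.getElem?_cons_zero, Option.getD_some]
          interval_cases v <;> rfl
        · have hu : u < F.length := by omega
          have hv2 : v < 2 := by omega
          interval_cases v <;> simp [hu, antUp]
      rw [hz]
      simp

/-- Boolean check of a concrete highway. -/
def antOk (N : ℕ) (V : List (List ℕ)) (x y : ℕ) (d : Dir) : Bool :=
  match antSim N (V, x + 2, y + 2, d) with
  | none => false
  | some s => decide (V = antZ :: antZ :: (s.1.take (V.length - 2)).map antUp ∧
      (s.1.drop (V.length - 2)).length = 2 ∧ s.2 = (x, y, d) ∧ x + 2 < V.length ∧ y + 2 < 10)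

theorem ant_highway_ok {N : ℕ} {V : List (List ℕ)} {x y : ℕ} {d : Dir}
    (h : antOk N V x y d = true) :
    ∃ (S : Set Cell) (P : Cell → ZMod 6) (p : Cell) (d : Dir),
      IsHighway 6 isLLRLRL N ((-2, -2) : Cell) S P p d := by
  unfold antOk at h
  split at h
  · cases h
  · rename_i s hs
    obtain ⟨h1, h2, h3, h4, h5⟩ := of_decide_eq_true h
    refine ant_highway (d := d) (T := s.1.drop (V.length - 2)) h1 ?_ h4 h5
    rw [hs, List.take_append_drop, ← h3]

def ant_hA : List (List ℕ) := [
  [0,0,0,0,0,0,0,0,0,0], [0,0,0,0,0,0,0,0,0,0], [0,0,0,0,0,0,2,2,2,2], [0,0,0,0,0,0,2,0,0,2],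
  [0,0,0,0,2,2,1,5,1,4], [0,0,0,0,2,5,3,3,2,3], [0,0,2,2,1,3,2,3,0,2], [0,0,2,5,3,2,3,1,1,1],
  [0,0,2,4,5,4,0,5,2,0], [0,0,2,4,4,5,0,1,0,2], [0,0,2,4,4,5,0,5,1,5], [0,0,2,4,4,5,0,0,0,1],
  [0,0,2,4,4,5,0,0,0,5], [0,0,2,4,4,5,0,0,0,0]]
def ant_hB : List (List ℕ) := [
  [0,0,0,0,0,0,0,0,0,0], [0,0,0,0,0,2,2,0,0,0], [0,0,0,0,0,2,5,4,3,2], [0,0,0,2,2,2,1,3,1,3],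
  [0,0,0,2,0,0,5,2,3,5], [0,2,2,1,5,2,5,1,5,3], [0,2,5,3,3,1,0,0,1,2], [0,1,3,5,4,5,0,2,1,1],
  [0,1,3,4,5,5,1,5,2,0], [0,1,3,4,5,0,0,1,0,2], [0,1,3,4,5,0,0,5,1,5], [0,1,3,4,5,0,0,0,0,1],
  [0,1,3,4,5,0,0,0,0,5], [0,1,3,4,5,0,0,0,0,0]]
def ant_hC : List (List ℕ) := [
  [0,0,0,0,2,2,2,2,0,0], [0,0,0,0,2,0,0,2,0,0], [0,0,2,2,1,5,1,4,3,2], [0,0,2,5,3,3,2,3,1,3],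
  [2,2,1,3,2,3,0,2,3,5], [2,5,3,2,3,1,1,1,5,3], [2,4,5,4,0,5,2,0,1,2], [2,4,4,5,0,1,0,2,1,1],
  [2,4,4,5,0,5,1,5,2,0], [2,4,4,5,0,0,0,1,0,2], [2,4,4,5,0,0,0,5,1,5], [2,4,4,5,0,0,0,0,0,1],
  [2,4,4,5,0,0,0,0,0,5]]
def ant_rA : List (List ℕ) := [
  [0,0,2,4,4,5,0,0,0,0], [0,0,2,4,4,5,0,0,0,0], [0,0,1,3,4,5,0,0,0,0], [0,0,0,0,4,0,5,0,0,0]]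
def ant_rB : List (List ℕ) := [
  [0,0,2,4,5,0,0,0,0,0], [0,0,3,5,5,0,0,0,0,0], [0,0,3,1,0,5,0,0,0,0], [0,0,2,3,5,0,5,0,0,0]]
def ant_rC : List (List ℕ) := [
  [0,1,3,5,0,0,0,0,0,0], [0,0,4,0,5,0,0,0,0,0], [0,0,3,1,0,5,0,0,0,0], [0,0,2,3,5,0,5,0,0,0]]
def ant_rD : List (List ℕ) := [
  [1,3,4,5,0,0,0,0,0,0], [0,0,4,0,5,0,0,0,0,0], [0,0,3,1,0,5,0,0,0,0], [0,0,2,3,5,0,5,0,0,0]]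

def antA : List ℕ := [0,0,2,4,4,5,0,0,0,0]
def antB : List ℕ := [0,0,2,4,5,0,0,0,0,0]
def antC : List ℕ := [0,1,3,4,5,0,0,0,0,0]
def antD : List ℕ := [0,1,3,5,0,0,0,0,0,0]
def antE : List ℕ := [2,3,3,5,0,0,0,0,0,0]
def antF : List ℕ := [2,4,4,5,0,0,0,0,0,0]

/-- Repetition of a column `2 * n` times. -/
def antRp (c : List ℕ) : ℕ → List (List ℕ)
  | 0 => []
  | n + 1 => c :: c :: antRp c n

theorem antRp_length (c : List ℕ) (n : ℕ) : (antRp c n).length = 2 * n := by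
  induction n with
  | zero => rfl
  | succ n ih => simp [antRp, ih]; ring

theorem antRp_comm (c : List ℕ) (n : ℕ) : c :: antRp c n = antRp c n ++ [c] := by
  induction n with
  | zero => rfl
  | succ n ih => simp only [antRp, List.cons_append]; rw [← ih]

theorem antRp_map (f : List ℕ → List ℕ) (c : List ℕ) (n : ℕ) :
    (antRp c n).map f = antRp (f c) n := by
  induction n with
  | zero => rfl
  | succ n ih => simp [antRp, ih]

theorem ant_sweepL {c c' : List ℕ} {y : ℕ} {d : Dir}
    (h : ∀ g, antSim 4 ([g, c, c], 2, y, d) = some ([g, c', c'], 0, y, d)) (n : ℕ) :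
    ∀ g, antSim (4 * n) (g :: antRp c n, 2 * n, y, d) = some (g :: antRp c' n, 0, y, d) := by
  induction n with
  | zero => intro g; rfl
  | succ n ih =>
    intro g
    refine antSim_add (s' := (g :: c :: c :: antRp c' n, 2, y, d)) ?_ ?_
    · exact antSim_loc (ih c) [g, c] [] (by simp [antRp]) (by simp) (by simp; ring) (by simp)
    · exact antSim_loc (h g) [] (antRp c' n) (by simp) (by simp [antRp]) (by simp) (by simp)

theorem ant_sweepR {c c' : List ℕ} {y : ℕ} {d : Dir}
    (h : antSim 4 ([c, c], 0, y, d) = some ([c', c'], 2, y, d)) (n : ℕ) :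
    antSim (4 * n) (antRp c n, 0, y, d) = some (antRp c' n, 2 * n, y, d) := by
  induction n with
  | zero => rfl
  | succ n ih =>
    rw [show 4 * (n + 1) = 4 + 4 * n by ring]
    refine antSim_add (s' := (c' :: c' :: antRp c n, 2, y, d)) ?_ ?_
    · exact antSim_loc h [] (antRp c n) (by simp [antRp]) (by simp) (by simp) (by simp)
    · exact antSim_loc ih [c', c'] [] (by simp) (by simp [antRp]) (by simp) (by simp; ring)

theorem ant_sweepR2 {l c c' : List ℕ} {y : ℕ} {d : Dir}
    (h : antSim 12 ([l, c, c], 1, y, d) = some ([c', c', l], 3, y, d)) (n : ℕ) :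
    antSim (12 * n) (l :: antRp c n, 1, y, d) = some (antRp c' n ++ [l], 1 + 2 * n, y, d) := by
  induction n with
  | zero => rfl
  | succ n ih =>
    rw [show 12 * (n + 1) = 12 + 12 * n by ring]
    refine antSim_add (s' := (c' :: c' :: l :: antRp c n, 3, y, d)) ?_ ?_
    · exact antSim_loc h [] (antRp c n) (by simp [antRp]) (by simp) (by simp) (by simp)
    · exact antSim_loc ih [c', c'] [] (by simp) (by simp [antRp]) (by simp) (by simp; ring)

theorem ant_seg1a : antSim 19 (ant_rA, 3, 2, .E)
    = some ([0,0,2,4,4,0,0,0,0,0] :: ant_rB.tail, 0, 4, .S) := by decide +kernel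

theorem ant_seg1 (g : List ℕ) :
    antSim 20 (g :: ant_rA, 4, 2, .E) = some (g :: ant_rB, 0, 4, .W) := by
  refine antSim_add (j := 19) (k := 1) (antSim_loc ant_seg1a [g] [] ?_ rfl rfl rfl) ?_
  · simp
  · rfl

theorem ant_seg2 : antSim 122 (ant_hA, 13, 4, .W) = some (ant_hB, 14, 1, .E) := by
  decide +kernel

theorem ant_seg3 (g : List ℕ) :
    antSim 6 (g :: ant_rB, 1, 1, .E) = some (g :: ant_rC, 0, 4, .W) := by rfl

theorem ant_seg4 : antSim 138 (ant_hB, 13, 4, .W) = some (ant_hC ++ [antE], 14, 1, .E) := by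
  decide +kernel

theorem ant_seg5 : antSim 6 (antE :: ant_rC, 1, 1, .E) = some (antF :: ant_rD, 2, 0, .E) := by
  decide +kernel

theorem ant_loop1 (g : List ℕ) :
    antSim 4 ([g, antA, antA], 2, 4, .W) = some ([g, antB, antB], 0, 4, .W) := by rfl

theorem ant_loop2 : antSim 4 ([antB, antB], 0, 1, .E) = some ([antC, antC], 2, 1, .E) := by
  decide +kernel

theorem ant_loop3 (g : List ℕ) :
    antSim 4 ([g, antC, antC], 2, 4, .W) = some ([g, antD, antD], 0, 4, .W) := by rfl

theorem ant_loop4 :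
    antSim 12 ([antE, antD, antD], 1, 1, .E) = some ([antF, antF, antE], 3, 1, .E) := by
  decide +kernel

/-- A nonempty list of columns ends with some column. -/
theorem ant_last (H : List (List ℕ)) (l : List ℕ) (c : List ℕ) (n : ℕ) :
    ∃ X g, H ++ [l] ++ antRp c n = X ++ [g] ∧ X.length = H.length + 2 * n := by
  have hne : H ++ [l] ++ antRp c n ≠ [] := by simp
  refine ⟨_, _, (List.dropLast_append_getLast hne).symm, ?_⟩
  simp [antRp_length]

/-- Moves at the right end of the arm. -/
theorem ant_right {k : ℕ} {r r' : List (List ℕ)} {x y y' : ℕ} {d d' : Dir}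
    (h : ∀ g, antSim k (g :: r, x + 1, y, d) = some (g :: r', 0, y', d'))
    (H : List (List ℕ)) (l : List ℕ) (c : List ℕ) (n : ℕ) :
    antSim k (H ++ [l] ++ antRp c n ++ r, H.length + 2 * n + (x + 1), y, d)
      = some (H ++ [l] ++ antRp c n ++ r', H.length + 2 * n, y', d') := by
  obtain ⟨X, g, e, hl⟩ := ant_last H l c n
  rw [e]
  exact antSim_loc (h g) X [] (by simp) (by simp) (by omega) (by simp; omega)

theorem ant_hA_eq : ant_hA = ant_hA.take 13 ++ [antA] := by rfl
theorem ant_hB_eq : ant_hB = ant_hB.take 13 ++ [antC] := by rfl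

theorem ant_main (n : ℕ) :
    antSim (292 + 24 * n) (ant_hA ++ antRp antA n ++ ant_rA, 2 * n + 15 + 2, 0 + 2, .E)
      = some (ant_hC ++ antRp antF n ++ [antF] ++ ant_rD, 2 * n + 15, 0, .E) := by
  have s1 : antSim 20 (ant_hA ++ antRp antA n ++ ant_rA, 2 * n + 17, 2, .E)
      = some (ant_hA ++ antRp antA n ++ ant_rB, 2 * n + 13, 4, .W) := by
    have := ant_right ant_seg1 (ant_hA.take 13) antA antA n
    rw [← ant_hA_eq, show (ant_hA.take 13).length = 13 from rfl] at this
    convert this using 4 <;> omega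
  have s2 : antSim (4 * n) (ant_hA ++ antRp antA n ++ ant_rB, 2 * n + 13, 4, .W)
      = some (ant_hA ++ antRp antB n ++ ant_rB, 13, 4, .W) := by
    refine antSim_loc (ant_sweepL ant_loop1 n antA) (ant_hA.take 13) ant_rB ?_ ?_ ?_ ?_
    · conv_lhs => rw [ant_hA_eq]
      simp
    · conv_lhs => rw [ant_hA_eq]
      simp
    · rw [show (ant_hA.take 13).length = 13 from rfl]; omega
    · rfl
  have s3 : antSim 122 (ant_hA ++ antRp antB n ++ ant_rB, 13, 4, .W)
      = some (ant_hB ++ antRp antB n ++ ant_rB, 14, 1, .E) :=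
    antSim_loc ant_seg2 [] (antRp antB n ++ ant_rB) (by simp) (by simp) (by simp) (by simp)
  have s4 : antSim (4 * n) (ant_hB ++ antRp antB n ++ ant_rB, 14, 1, .E)
      = some (ant_hB ++ antRp antC n ++ ant_rB, 2 * n + 14, 1, .E) :=
    antSim_loc (ant_sweepR ant_loop2 n) ant_hB ant_rB rfl rfl rfl
      (by rw [show ant_hB.length = 14 from rfl]; omega)
  have s5 : antSim 6 (ant_hB ++ antRp antC n ++ ant_rB, 2 * n + 14, 1, .E)
      = some (ant_hB ++ antRp antC n ++ ant_rC, 2 * n + 13, 4, .W) := by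
    have := ant_right ant_seg3 (ant_hB.take 13) antC antC n
    rw [← ant_hB_eq, show (ant_hB.take 13).length = 13 from rfl] at this
    convert this using 4 <;> omega
  have s6 : antSim (4 * n) (ant_hB ++ antRp antC n ++ ant_rC, 2 * n + 13, 4, .W)
      = some (ant_hB ++ antRp antD n ++ ant_rC, 13, 4, .W) := by
    refine antSim_loc (ant_sweepL ant_loop3 n antC) (ant_hB.take 13) ant_rC ?_ ?_ ?_ ?_
    · conv_lhs => rw [ant_hB_eq]
      simp
    · conv_lhs => rw [ant_hB_eq]
      simp
    · rw [show (ant_hB.take 13).length = 13 from rfl]; omega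
    · rfl
  have s7 : antSim 138 (ant_hB ++ antRp antD n ++ ant_rC, 13, 4, .W)
      = some (ant_hC ++ [antE] ++ antRp antD n ++ ant_rC, 14, 1, .E) :=
    antSim_loc ant_seg4 [] (antRp antD n ++ ant_rC) (by simp) (by simp) (by simp) (by simp)
  have s8 : antSim (12 * n) (ant_hC ++ [antE] ++ antRp antD n ++ ant_rC, 14, 1, .E)
      = some (ant_hC ++ antRp antF n ++ [antE] ++ ant_rC, 2 * n + 14, 1, .E) :=
    antSim_loc (ant_sweepR2 ant_loop4 n) ant_hC ant_rC (by simp) (by simp) rfl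
      (by rw [show ant_hC.length = 13 from rfl]; omega)
  have s9 : antSim 6 (ant_hC ++ antRp antF n ++ [antE] ++ ant_rC, 2 * n + 14, 1, .E)
      = some (ant_hC ++ antRp antF n ++ [antF] ++ ant_rD, 2 * n + 15, 0, .E) :=
    antSim_loc ant_seg5 (ant_hC ++ antRp antF n) [] (by simp) (by simp)
      (by rw [List.length_append, antRp_length, show ant_hC.length = 13 from rfl]; omega)
      (by rw [List.length_append, antRp_length, show ant_hC.length = 13 from rfl]; omega)
  have := antSim_add s1 (antSim_add s2 (antSim_add s3 (antSim_add s4 (antSim_add s5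
    (antSim_add s6 (antSim_add s7 (antSim_add s8 s9)))))))
  convert this using 2
  omega

theorem ant_big (n : ℕ) :
    ∃ (S : Set Cell) (P : Cell → ZMod 6) (p : Cell) (d : Dir),
      IsHighway 6 isLLRLRL (292 + 24 * n) ((-2, -2) : Cell) S P p d := by
  have hm := ant_main n
  rw [show ant_hC ++ antRp antF n ++ [antF] ++ ant_rD
    = (ant_hC ++ antRp antF n ++ [antF] ++ ant_rD.take 2) ++ ant_rD.drop 2 by
      rw [List.append_assoc _ (ant_rD.take 2), List.take_append_drop]] at hm
  refine ant_highway ?_ hm ?_ (by norm_num)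
  · rw [List.map_append, List.map_append, List.map_append, antRp_map,
      show antUp antF = antA from rfl, show ant_rD.take 2 = ant_rD.take 2 from rfl]
    have e1 : ant_hA = antZ :: antZ :: (ant_hC.map antUp).take 12 := by rfl
    have e2 : ant_hC.map antUp = (ant_hC.map antUp).take 12 ++ [antA] := by rfl
    have e3 : ant_rA = [antA, antA] ++ (ant_rD.take 2).map antUp := by rfl
    have e4 : [antF].map antUp = [antA] := by rfl
    rw [e1, e3, e4]
    conv_rhs => rw [e2]
    have c1 := antRp_comm antA n
    simp only [List.cons_append, List.append_assoc, List.nil_append]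
    rw [← List.cons_append (bs := antA :: List.map antUp (List.take 2 ant_rD)) (as := antRp antA n), c1]
    simp
  · simp only [List.length_append, antRp_length]
    rw [show ant_hA.length = 14 from rfl, show ant_rA.length = 4 from rfl]
    omega

/-- For every `n ∈ ℕ`, the generalised ant with rule word `LLRLRL`
admits a highway of period `220 + 24n` and drift `(−2,−2)`. -/
theorem llrlrl_highways (n : ℕ) :
    ∃ (S : Set Cell) (P : Cell → ZMod 6) (p : Cell) (d : Dir),
      IsHighway 6 isLLRLRL (220 + 24 * n) ((-2, -2) : Cell) S P p d := by
  rcases n with _ | _ | _ | n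
  · exact ant_highway_ok (V := ant_hA.take 10 ++ [[0,0,1,3,4,5,0,5,1,5], [0,0,0,0,4,0,5,0,0,1]])
      (x := 9) (y := 0) (d := .E) (by decide +kernel)
  · exact ant_highway_ok (V := ant_hA.take 12 ++ [[0,0,1,3,4,5,0,0,0,5], [0,0,0,0,4,0,5,0,0,0]])
      (x := 11) (y := 0) (d := .E) (by decide +kernel)
  · exact ant_highway_ok (V := ant_hA ++ [[0,0,1,3,4,5,0,0,0,0], [0,0,0,0,4,0,5,0,0,0]])
      (x := 13) (y := 0) (d := .E) (by decide +kernel)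
  · have := ant_big n
    rwa [show 292 + 24 * n = 220 + 24 * (n + 3) by ring] at this
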